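/- arXiv:2112.15046 — 2 statements merged into one kernel-verified Lean document; each statement's English description precedes it below -/
import Mathlib

section
/- Let G be a finitely generated group equipped with the word metric of a finite generating set, and let 𝒫 be a finite qi-characteristic collection of subgroups of G. If H is a finitely generated group (with the word metric of a finite generating set) and q : G → H is a quasi-isometry, then there is a qi-characteristic collection of subgroups 𝒬 of H such that q : (G,𝒫) → (H,𝒬) is a quasi-isometry of pairs. -/
open Pointwise
open scoped ENNReal

/-- Hausdorff distance (valued in `ℝ≥0∞`) between two subsets, with respect to an
arbitrary distance function `d`. -/
noncomputable def hdist {Y : Type*} (d : Y → Y → ℝ) (A B : Set Y) : ℝ≥0∞ :=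
  max (⨆ a ∈ A, ⨅ b ∈ B, ENNReal.ofReal (d a b))
      (⨆ b ∈ B, ⨅ a ∈ A, ENNReal.ofReal (d a b))

/-- `q : X → Y` is an `(L,C)`-quasi-isometry with respect to the distance functions
`dX`, `dY`. -/
def IsQI {X Y : Type*} (dX : X → X → ℝ) (dY : Y → Y → ℝ) (L C : ℝ) (q : X → Y) : Prop :=
  1 ≤ L ∧ 0 ≤ C ∧
    (∀ x x' : X, L⁻¹ * dX x x' - C ≤ dY (q x) (q x') ∧ dY (q x) (q x') ≤ L * dX x x' + C) ∧
    ∀ y : Y, ∃ x : X, dY y (q x) ≤ C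

/-- `q : (X, 𝒜) → (Y, ℬ)` is an `(L,C,M)`-quasi-isometry of pairs. -/
def IsQIPair {X Y : Type*} (dX : X → X → ℝ) (dY : Y → Y → ℝ) (L C M : ℝ)
    (q : X → Y) (𝒜 : Set (Set X)) (ℬ : Set (Set Y)) : Prop :=
  IsQI dX dY L C q ∧
    (∀ A ∈ 𝒜, ∃ B ∈ ℬ, hdist dY (q '' A) B < ENNReal.ofReal M) ∧
    (∀ B ∈ ℬ, ∃ A ∈ 𝒜, hdist dY (q '' A) B < ENNReal.ofReal M)

/-- A subset `B` is bounded with respect to the distance function `d`. -/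
def BoundedWrt {X : Type*} (d : X → X → ℝ) (B : Set X) : Prop :=
  ∃ r : ℝ, ∀ x ∈ B, ∀ y ∈ B, d x y ≤ r

/-- A collection `𝒜` of subspaces of `X` is quasi-isometrically characteristic. -/
def IsQIChar {X : Type*} (d : X → X → ℝ) (𝒜 : Set (Set X)) : Prop :=
  (∀ L C : ℝ, 1 ≤ L → 0 ≤ C → ∃ M > (0 : ℝ),
      ∀ q : X → X, IsQI d d L C q → IsQIPair d d L C M q 𝒜 𝒜) ∧
    (∀ B : Set X, BoundedWrt d B →
      ∃ F : Set (Set X), F.Finite ∧ F ⊆ 𝒜 ∧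
        ∀ A ∈ 𝒜, (A ∩ B).Nonempty → ∃ A' ∈ F, hdist d A A' < ⊤) ∧
    (∀ A ∈ 𝒜, ∃ r : ℝ≥0∞, r < ⊤ ∧
      ∀ A₁ ∈ 𝒜, ∀ A₂ ∈ 𝒜, hdist d A A₁ < ⊤ → hdist d A A₂ < ⊤ → hdist d A₁ A₂ ≤ r)

/-- The word metric on a group `G` with respect to a generating set `S`:
`wordDist S g h` is the least `n` such that `g⁻¹ * h` is a product of `n` elements
of `S ∪ S⁻¹`. -/
noncomputable def wordDist {G : Type*} [Group G] (S : Set G) (g h : G) : ℝ :=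
  (sInf {n : ℕ | g⁻¹ * h ∈ (S ∪ S⁻¹) ^ n} : ℕ)

/-- The collection of all left cosets `gP` with `g ∈ G` and `P ∈ PP`. -/
def cosets {G : Type*} [Group G] (PP : Set (Subgroup G)) : Set (Set G) :=
  {A : Set G | ∃ g : G, ∃ P ∈ PP, A = g • (P : Set G)}

/-!
Replacing the given collection by its image under `q` reduces everything to a qi-characteristic
collection `𝒜` of nonempty subsets of the group `H` itself. Left translations of `H` are isometries,
so adding all translates of members of `𝒜` changes `𝒜` only up to a uniform Hausdorff distance; we
may thus assume `𝒜` to be translation invariant. Every member has a translate through `1`, and these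
fall into finitely many coarse classes, represented by a finite `F ⊆ 𝒜`. Finiteness of `F` makes all
bounds uniform, and it shows that each `A ∈ 𝒜` is at finite Hausdorff distance from its coarse
stabilizer, the group of those `h` for which `h • A` is at finite Hausdorff distance from `A`: two
points `a, k ∈ A` for which `a⁻¹ • A` and `k⁻¹ • A` lie in the same class give an element `a * k⁻¹`
of the stabilizer, at distance `dist 1 k⁻¹` from `a`. The coarse stabilizers of the members of `F`
are the subgroups sought.
-/

open Set Metric Bornology

lemma exists_ne_top_forall_mem_le {ι : Type*} {F : Set ι} (hF : F.Finite) {f : ι → ℝ≥0∞}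
    (hf : ∀ i ∈ F, f i ≠ ⊤) : ∃ r ≠ ⊤, ∀ i ∈ F, f i ≤ r := by
  refine ⟨hF.toFinset.sup f, ?_, fun i hi ↦ Finset.le_sup (hF.mem_toFinset.2 hi)⟩
  rw [← lt_top_iff_ne_top, Finset.sup_lt_iff ENNReal.zero_lt_top]
  exact fun i hi ↦ (hf i (hF.mem_toFinset.1 hi)).lt_top

lemma lt_ofReal_toReal_add_one {r : ℝ≥0∞} (hr : r ≠ ⊤) :
    r < ENNReal.ofReal (r.toReal + 1) :=
  (ENNReal.lt_ofReal_iff_toReal_lt hr).2 (lt_add_one _)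

section Hausdorff

variable {X Y Z : Type*} [PseudoMetricSpace X] [PseudoMetricSpace Y]

lemma hdist_dist_eq_hausdorffEDist (A B : Set X) : hdist dist A B = hausdorffEDist A B := by
  simp only [hdist, hausdorffEDist, infEDist, ← edist_dist, edist_comm]

lemma boundedWrt_dist_iff {B : Set X} : BoundedWrt dist B ↔ IsBounded B :=
  isBounded_iff.symm

lemma infEDist_image_le_mul_add {f : Z → Y} {g : Z → X} {K c : ℝ≥0∞} (hK₀ : K ≠ 0) (hK : K ≠ ⊤)
    (h : ∀ z z', edist (f z) (f z') ≤ K * edist (g z) (g z') + c) (z : Z) (B : Set Z) :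
    infEDist (f z) (f '' B) ≤ K * infEDist (g z) (g '' B) + c := by
  simp only [infEDist, iInf_image, ENNReal.mul_iInf_of_ne hK₀ hK, ENNReal.iInf_add]
  exact iInf₂_mono fun z' _ ↦ h z z'

lemma hausdorffEDist_image_le_mul_add {f : Z → Y} {g : Z → X} {K c : ℝ≥0∞} (hK₀ : K ≠ 0)
    (hK : K ≠ ⊤) (h : ∀ z z', edist (f z) (f z') ≤ K * edist (g z) (g z') + c) (A B : Set Z) :
    hausdorffEDist (f '' A) (f '' B) ≤ K * hausdorffEDist (g '' A) (g '' B) + c := by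
  apply hausdorffEDist_le_of_infEDist
  · rintro _ ⟨a, ha, rfl⟩
    grw [infEDist_image_le_mul_add hK₀ hK h,
      infEDist_le_hausdorffEDist_of_mem (mem_image_of_mem g ha)]
  · rintro _ ⟨b, hb, rfl⟩
    grw [infEDist_image_le_mul_add hK₀ hK h,
      infEDist_le_hausdorffEDist_of_mem (mem_image_of_mem g hb), hausdorffEDist_comm]

lemma hausdorffEDist_image_le_of_edist_le {f g : Z → Y} {r : ℝ≥0∞}
    (h : ∀ z, edist (f z) (g z) ≤ r) (A : Set Z) : hausdorffEDist (f '' A) (g '' A) ≤ r := by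
  apply hausdorffEDist_le_of_mem_edist
  · rintro _ ⟨a, ha, rfl⟩
    exact ⟨g a, mem_image_of_mem g ha, h a⟩
  · rintro _ ⟨a, ha, rfl⟩
    exact ⟨f a, mem_image_of_mem f ha, edist_comm (f a) (g a) ▸ h a⟩

lemma hausdorffEDist_smul_smul {M : Type*} [SMul M X] [IsIsometricSMul M X] (c : M) (A B : Set X) :
    hausdorffEDist (c • A) (c • B) = hausdorffEDist A B :=
  hausdorffEDist_image (isometry_smul X c)

/-- Coarse equivalence of subsets: being at finite Hausdorff distance. -/
def CoarselyEquiv (A B : Set X) : Prop :=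
  hausdorffEDist A B ≠ ⊤

namespace CoarselyEquiv

variable {A A' A'' : Set X}

lemma refl (A : Set X) : CoarselyEquiv A A := by
  simp [CoarselyEquiv]

lemma symm (h : CoarselyEquiv A A') : CoarselyEquiv A' A := by
  rwa [CoarselyEquiv, hausdorffEDist_comm]

lemma trans (h : CoarselyEquiv A A') (h' : CoarselyEquiv A' A'') : CoarselyEquiv A A'' :=
  ne_top_of_le_ne_top (ENNReal.add_ne_top.2 ⟨h, h'⟩) hausdorffEDist_triangle

lemma of_le {r : ℝ≥0∞} (hr : r ≠ ⊤) (h : hausdorffEDist A A' ≤ r) : CoarselyEquiv A A' :=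
  ne_top_of_le_ne_top hr h

lemma smul {M : Type*} [SMul M X] [IsIsometricSMul M X] (h : CoarselyEquiv A A') (c : M) :
    CoarselyEquiv (c • A) (c • A') := by
  rwa [CoarselyEquiv, hausdorffEDist_smul_smul]

end CoarselyEquiv

end Hausdorff

section QuasiIsometry

variable {X Y Z : Type*} [PseudoMetricSpace X] [PseudoMetricSpace Y] [PseudoMetricSpace Z]
  {L C L' C' : ℝ} {q : X → Y}

lemma isQI_of_isometryEquiv (e : X ≃ᵢ Y) : IsQI dist dist 1 0 e :=
  ⟨le_rfl, le_rfl, fun x x' ↦ by simp [e.dist_eq], fun y ↦ ⟨e.symm y, by simp⟩⟩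

namespace IsQI

lemma pos (hq : IsQI dist dist L C q) : 0 < L :=
  one_pos.trans_le hq.1

lemma dist_map_le (hq : IsQI dist dist L C q) (x x' : X) : dist (q x) (q x') ≤ L * dist x x' + C :=
  (hq.2.2.1 x x').2

lemma dist_le (hq : IsQI dist dist L C q) (x x' : X) :
    dist x x' ≤ L * (dist (q x) (q x') + C) := by
  rw [← inv_mul_le_iff₀ hq.pos]
  linarith [(hq.2.2.1 x x').1]

lemma edist_map_le (hq : IsQI dist dist L C q) (x x' : X) :
    edist (q x) (q x') ≤ ENNReal.ofReal L * edist x x' + ENNReal.ofReal C := by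
  have hL := hq.pos.le
  rw [edist_dist, edist_dist, ← ENNReal.ofReal_mul hL,
    ← ENNReal.ofReal_add (by positivity) hq.2.1]
  exact ENNReal.ofReal_le_ofReal (hq.dist_map_le x x')

lemma edist_le (hq : IsQI dist dist L C q) (x x' : X) :
    edist x x' ≤ ENNReal.ofReal L * edist (q x) (q x') + ENNReal.ofReal (L * C) := by
  have hL := hq.pos.le
  rw [edist_dist, edist_dist, ← ENNReal.ofReal_mul hL,
    ← ENNReal.ofReal_add (by positivity) (mul_nonneg hL hq.2.1), ← mul_add]
  exact ENNReal.ofReal_le_ofReal (hq.dist_le x x')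

lemma hausdorffEDist_image_le (hq : IsQI dist dist L C q) (A B : Set X) :
    hausdorffEDist (q '' A) (q '' B) ≤
      ENNReal.ofReal L * hausdorffEDist A B + ENNReal.ofReal C := by
  simpa using hausdorffEDist_image_le_mul_add (g := id) (by simpa using hq.pos)
    ENNReal.ofReal_ne_top hq.edist_map_le A B

lemma hausdorffEDist_le (hq : IsQI dist dist L C q) (A B : Set X) :
    hausdorffEDist A B ≤
      ENNReal.ofReal L * hausdorffEDist (q '' A) (q '' B) + ENNReal.ofReal (L * C) := by
  simpa using hausdorffEDist_image_le_mul_add (f := id) (by simpa using hq.pos)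
    ENNReal.ofReal_ne_top hq.edist_le A B

lemma coarselyEquiv_image_iff (hq : IsQI dist dist L C q) {A B : Set X} :
    CoarselyEquiv (q '' A) (q '' B) ↔ CoarselyEquiv A B := by
  refine ⟨fun (h : _ ≠ _) ↦ .of_le ?_ (hq.hausdorffEDist_le A B),
    fun (h : _ ≠ _) ↦ .of_le ?_ (hq.hausdorffEDist_image_le A B)⟩ <;> finiteness

lemma isBounded_preimage (hq : IsQI dist dist L C q) {B : Set Y} (hB : IsBounded B) :
    IsBounded (q ⁻¹' B) := by
  obtain ⟨r, hr⟩ := isBounded_iff.1 hB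
  have hL := hq.pos
  refine isBounded_iff.2 ⟨L * (r + C), fun x hx x' hx' ↦ ?_⟩
  grw [hq.dist_le x x', hr hx hx']

lemma comp {g : Y → Z} (hg : IsQI dist dist L' C' g) (hq : IsQI dist dist L C q) :
    IsQI dist dist (L' * L) (L' * C + 2 * C') (g ∘ q) := by
  have hL := hq.pos
  have hL' := hg.pos
  have hC := hq.2.1
  have hC' := hg.2.1
  have hC_le : C ≤ L' * C := le_mul_of_one_le_left hC hg.1
  refine ⟨one_le_mul_of_one_le_of_one_le hg.1 hq.1, by positivity, fun x x' ↦ ⟨?_, ?_⟩, fun z ↦ ?_⟩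
  · have : dist x x' ≤ L' * L * (dist (g (q x)) (g (q x')) + (L' * C + 2 * C')) := calc
      dist x x' ≤ L * (dist (q x) (q x') + C) := hq.dist_le x x'
      _ ≤ L * (L' * (dist (g (q x)) (g (q x')) + C') + L' * (L' * C)) := by
        gcongr
        · exact hg.dist_le _ _
        · exact hC_le.trans (le_mul_of_one_le_left (by positivity) hg.1)
      _ ≤ L' * L * (dist (g (q x)) (g (q x')) + (L' * C + 2 * C')) := by
        linarith [show 0 ≤ L * L' * C' by positivity]
    rw [sub_le_iff_le_add, inv_mul_le_iff₀ (by positivity)]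
    exact this
  · calc dist (g (q x)) (g (q x')) ≤ L' * (L * dist x x' + C) + C' := by
          grw [hg.dist_map_le, hq.dist_map_le]
      _ ≤ L' * L * dist x x' + (L' * C + 2 * C') := by linarith
  · obtain ⟨y, hy⟩ := hg.2.2.2 z
    obtain ⟨x, hx⟩ := hq.2.2.2 y
    refine ⟨x, ?_⟩
    calc dist z (g (q x)) ≤ C' + (L' * C + C') := by
          grw [dist_triangle z (g y), hy, hg.dist_map_le, hx]
      _ = L' * C + 2 * C' := by ring

lemma of_rightQuasiInverse (hq : IsQI dist dist L C q) {p : Y → X}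
    (hp : ∀ y, dist y (q (p y)) ≤ C) : IsQI dist dist L (3 * L * C) p := by
  have hL := hq.pos
  have hC := hq.2.1
  refine ⟨hq.1, by positivity, fun y y' ↦ ⟨?_, ?_⟩, fun x ↦ ⟨q x, ?_⟩⟩
  · have : dist y y' ≤ L * (dist (p y) (p y') + 3 * L * C) := calc
      dist y y' ≤ dist y (q (p y)) + dist (q (p y)) (q (p y')) + dist (q (p y')) y' :=
        dist_triangle4 ..
      _ ≤ C + (L * dist (p y) (p y') + C) + C := by
        grw [hp y, hq.dist_map_le, dist_comm _ y', hp y']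
      _ ≤ L * dist (p y) (p y') + L * L * (3 * C) := by
        linarith [le_mul_of_one_le_left (by positivity : 0 ≤ 3 * C)
          (one_le_mul_of_one_le_of_one_le hq.1 hq.1)]
      _ = L * (dist (p y) (p y') + 3 * L * C) := by ring
    rw [sub_le_iff_le_add, inv_mul_le_iff₀ hL]
    exact this
  · calc dist (p y) (p y') ≤ L * (dist (q (p y)) (q (p y')) + C) := hq.dist_le _ _
      _ ≤ L * (C + dist y y' + C + C) := by
        grw [dist_triangle4 (q (p y)) y y' (q (p y')), dist_comm _ y, hp y, hp y']
      _ = L * dist y y' + 3 * L * C := by ring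
  · calc dist x (p (q x)) ≤ L * (C + C) := by grw [hq.dist_le, hp]
      _ ≤ 3 * L * C := by linarith [mul_nonneg hL.le hC]

end IsQI

end QuasiIsometry

section Collections

variable {X Y : Type*} [PseudoMetricSpace X] [PseudoMetricSpace Y] {L C : ℝ} {q : X → Y}
  {r s : ℝ≥0∞} {𝒜 ℬ 𝒞 : Set (Set X)}

/-- Two collections of subsets are `r`-close if every member of either one is at Hausdorff distance
at most `r` from some member of the other. -/
def UniformlyClose (r : ℝ≥0∞) (𝒜 ℬ : Set (Set X)) : Prop :=
  (∀ A ∈ 𝒜, ∃ B ∈ ℬ, hausdorffEDist A B ≤ r) ∧ ∀ B ∈ ℬ, ∃ A ∈ 𝒜, hausdorffEDist A B ≤ r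

namespace UniformlyClose

lemma symm (h : UniformlyClose r 𝒜 ℬ) : UniformlyClose r ℬ 𝒜 := by
  simpa only [UniformlyClose, and_comm, hausdorffEDist_comm] using h

lemma trans (h : UniformlyClose r 𝒜 ℬ) (h' : UniformlyClose s ℬ 𝒞) :
    UniformlyClose (r + s) 𝒜 𝒞 := by
  constructor
  · intro A hA
    obtain ⟨B, hB, hAB⟩ := h.1 A hA
    obtain ⟨D, hD, hBD⟩ := h'.1 B hB
    exact ⟨D, hD, hausdorffEDist_triangle.trans (add_le_add hAB hBD)⟩
  · intro D hD
    obtain ⟨B, hB, hBD⟩ := h'.2 D hD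
    obtain ⟨A, hA, hAB⟩ := h.2 B hB
    exact ⟨A, hA, hausdorffEDist_triangle.trans (add_le_add hAB hBD)⟩

lemma image (h : UniformlyClose r 𝒜 ℬ) (hq : IsQI dist dist L C q) :
    UniformlyClose (ENNReal.ofReal L * r + ENNReal.ofReal C) (image q '' 𝒜) (image q '' ℬ) := by
  constructor
  · rintro _ ⟨A, hA, rfl⟩
    obtain ⟨B, hB, hAB⟩ := h.1 A hA
    exact ⟨q '' B, mem_image_of_mem _ hB, by grw [hq.hausdorffEDist_image_le, hAB]⟩
  · rintro _ ⟨B, hB, rfl⟩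
    obtain ⟨A, hA, hAB⟩ := h.2 B hB
    exact ⟨q '' A, mem_image_of_mem _ hA, by grw [hq.hausdorffEDist_image_le, hAB]⟩

end UniformlyClose

lemma uniformlyClose_image_of_edist_le {Z : Type*} {f g : Z → Y} (h : ∀ z, edist (f z) (g z) ≤ r)
    (𝒵 : Set (Set Z)) : UniformlyClose r (image f '' 𝒵) (image g '' 𝒵) := by
  constructor
  · rintro _ ⟨A, hA, rfl⟩
    exact ⟨g '' A, mem_image_of_mem _ hA, hausdorffEDist_image_le_of_edist_le h A⟩
  · rintro _ ⟨A, hA, rfl⟩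
    exact ⟨f '' A, mem_image_of_mem _ hA, hausdorffEDist_image_le_of_edist_le h A⟩

lemma IsQIPair.uniformlyClose {M : ℝ} {ℬ : Set (Set Y)} (h : IsQIPair dist dist L C M q 𝒜 ℬ) :
    UniformlyClose (ENNReal.ofReal M) (image q '' 𝒜) ℬ := by
  simp only [IsQIPair, hdist_dist_eq_hausdorffEDist] at h
  constructor
  · rintro _ ⟨A, hA, rfl⟩
    obtain ⟨B, hB, hAB⟩ := h.2.1 A hA
    exact ⟨B, hB, hAB.le⟩
  · intro B hB
    obtain ⟨A, hA, hAB⟩ := h.2.2 B hB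
    exact ⟨q '' A, mem_image_of_mem _ hA, hAB.le⟩

lemma UniformlyClose.isQIPair {ℬ : Set (Set Y)} (h : UniformlyClose r (Set.image q '' 𝒜) ℬ)
    (hr : r ≠ ⊤) (hq : IsQI dist dist L C q) :
    IsQIPair dist dist L C (r.toReal + 1) q 𝒜 ℬ := by
  have hr_lt := lt_ofReal_toReal_add_one hr
  simp only [IsQIPair, hdist_dist_eq_hausdorffEDist]
  refine ⟨hq, fun A hA ↦ ?_, fun B hB ↦ ?_⟩
  · obtain ⟨B, hB, hAB⟩ := h.1 _ (mem_image_of_mem _ hA)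
    exact ⟨B, hB, hAB.trans_lt hr_lt⟩
  · obtain ⟨_, ⟨A, hA, rfl⟩, hAB⟩ := h.2 B hB
    exact ⟨A, hA, hAB.trans_lt hr_lt⟩

/-- Condition (1) of qi-characteristic collections: every quasi-isometry of the ambient space moves
the collection by a uniform amount depending only on the quasi-isometry constants. -/
def QIPreserved (𝒜 : Set (Set X)) : Prop :=
  ∀ L C : ℝ, ∃ r ≠ ⊤, ∀ f : X → X, IsQI dist dist L C f → UniformlyClose r (image f '' 𝒜) 𝒜

/-- Condition (2) of qi-characteristic collections: the members meeting a given bounded set fall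
into finitely many coarse equivalence classes. -/
def LocallyFiniteClasses (𝒜 : Set (Set X)) : Prop :=
  ∀ B : Set X, IsBounded B → ∃ F ⊆ 𝒜, F.Finite ∧
    ∀ A ∈ 𝒜, (A ∩ B).Nonempty → ∃ A' ∈ F, CoarselyEquiv A A'

/-- Condition (3) of qi-characteristic collections: every coarse equivalence class of members is
bounded in Hausdorff distance. -/
def BoundedClasses (𝒜 : Set (Set X)) : Prop :=
  ∀ A ∈ 𝒜, ∃ r ≠ ⊤, ∀ A₁ ∈ 𝒜, ∀ A₂ ∈ 𝒜,
    CoarselyEquiv A A₁ → CoarselyEquiv A A₂ → hausdorffEDist A₁ A₂ ≤ r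

lemma qiPreserved_iff :
    QIPreserved 𝒜 ↔ ∀ L C : ℝ, 1 ≤ L → 0 ≤ C → ∃ M > (0 : ℝ),
      ∀ f : X → X, IsQI dist dist L C f → IsQIPair dist dist L C M f 𝒜 𝒜 := by
  refine ⟨fun h L C _ _ ↦ ?_, fun h L C ↦ ?_⟩
  · obtain ⟨r, hr, hclose⟩ := h L C
    exact ⟨r.toReal + 1, by positivity, fun f hf ↦ (hclose f hf).isQIPair hr hf⟩
  · by_cases hLC : 1 ≤ L ∧ 0 ≤ C
    · obtain ⟨M, -, hpair⟩ := h L C hLC.1 hLC.2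
      exact ⟨ENNReal.ofReal M, ENNReal.ofReal_ne_top, fun f hf ↦ (hpair f hf).uniformlyClose⟩
    · exact ⟨0, ENNReal.zero_ne_top, fun f hf ↦ absurd ⟨hf.1, hf.2.1⟩ hLC⟩

lemma isQIChar_iff :
    IsQIChar dist 𝒜 ↔ QIPreserved 𝒜 ∧ LocallyFiniteClasses 𝒜 ∧ BoundedClasses 𝒜 := by
  rw [IsQIChar, ← qiPreserved_iff]
  simp only [LocallyFiniteClasses, BoundedClasses, boundedWrt_dist_iff,
    hdist_dist_eq_hausdorffEDist, lt_top_iff_ne_top, CoarselyEquiv, and_left_comm (a := _ ⊆ 𝒜)]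

lemma QIPreserved.congr (h𝒜 : QIPreserved 𝒜) (h : UniformlyClose r 𝒜 ℬ) (hr : r ≠ ⊤) :
    QIPreserved ℬ := by
  intro L C
  obtain ⟨s, hs, hclose⟩ := h𝒜 L C
  exact ⟨_, by finiteness, fun f hf ↦ ((h.symm.image hf).trans (hclose f hf)).trans h⟩

lemma LocallyFiniteClasses.congr (h𝒜 : LocallyFiniteClasses 𝒜) (h : UniformlyClose r 𝒜 ℬ)
    (hr : r ≠ ⊤) : LocallyFiniteClasses ℬ := by
  intro S hS
  obtain ⟨F, hF𝒜, hF, hrep⟩ := h𝒜 _ (hS.thickening (δ := r.toReal + 1))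
  choose! b hbℬ hb using h.1
  refine ⟨b '' F, image_subset_iff.2 fun A hA ↦ hbℬ A (hF𝒜 hA), hF.image b, ?_⟩
  rintro B hB ⟨y, hyB, hyS⟩
  obtain ⟨A, hA, hAB⟩ := h.2 B hB
  obtain ⟨a, haA, hya⟩ := exists_edist_lt_of_hausdorffEDist_lt hyB
    ((hausdorffEDist_comm.trans_le hAB).trans_lt (lt_ofReal_toReal_add_one hr))
  have ha_near : a ∈ thickening (r.toReal + 1) S :=
    (mem_thickening_iff_exists_edist_lt _ _).2 ⟨y, hyS, edist_comm y a ▸ hya⟩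
  obtain ⟨A', hA'F, hAA'⟩ := hrep A hA ⟨a, haA, ha_near⟩
  exact ⟨b A', mem_image_of_mem b hA'F,
    ((CoarselyEquiv.of_le hr hAB).symm.trans hAA').trans (.of_le hr (hb A' (hF𝒜 hA'F)))⟩

lemma BoundedClasses.congr (h𝒜 : BoundedClasses 𝒜) (h : UniformlyClose r 𝒜 ℬ) (hr : r ≠ ⊤) :
    BoundedClasses ℬ := by
  intro B hB
  choose! a ha𝒜 ha using h.2
  obtain ⟨s, hs, hbound⟩ := h𝒜 (a B) (ha𝒜 B hB)
  have coarselyEquiv_a : ∀ B' ∈ ℬ, CoarselyEquiv B B' → CoarselyEquiv (a B) (a B') :=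
    fun B' hB' hBB' ↦ ((CoarselyEquiv.of_le hr (ha B hB)).trans hBB').trans
      (CoarselyEquiv.of_le hr (ha B' hB')).symm
  refine ⟨r + (s + r), by finiteness, fun B₁ hB₁ B₂ hB₂ h₁ h₂ ↦ ?_⟩
  grw [hausdorffEDist_triangle (t := a B₁), hausdorffEDist_triangle (s := a B₁) (t := a B₂),
    hausdorffEDist_comm (s := B₁), ha B₁ hB₁, ha B₂ hB₂,
    hbound _ (ha𝒜 B₁ hB₁) _ (ha𝒜 B₂ hB₂) (coarselyEquiv_a B₁ hB₁ h₁) (coarselyEquiv_a B₂ hB₂ h₂)]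

lemma IsQIChar.congr (h𝒜 : IsQIChar dist 𝒜) (h : UniformlyClose r 𝒜 ℬ) (hr : r ≠ ⊤) :
    IsQIChar dist ℬ := by
  rw [isQIChar_iff] at h𝒜 ⊢
  exact ⟨h𝒜.1.congr h hr, h𝒜.2.1.congr h hr, h𝒜.2.2.congr h hr⟩

lemma QIPreserved.image (h𝒜 : QIPreserved 𝒜) (hq : IsQI dist dist L C q) :
    QIPreserved (image q '' 𝒜) := by
  intro L₁ C₁
  choose p hp using hq.2.2.2
  obtain ⟨s, hs, hclose⟩ := h𝒜 (L * (L₁ * L)) (L * (L₁ * C + 2 * C₁) + 2 * (3 * L * C))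
  refine ⟨ENNReal.ofReal C + (ENNReal.ofReal L * s + ENNReal.ofReal C), by finiteness,
    fun f hf ↦ ?_⟩
  have conjugate_close := hclose _ ((hq.of_rightQuasiInverse hp).comp (hf.comp hq))
  have close_conjugate : UniformlyClose (ENNReal.ofReal C) (Set.image f '' (Set.image q '' 𝒜))
      (Set.image q '' (Set.image (p ∘ f ∘ q) '' 𝒜)) := by
    simp only [image_image _ _ 𝒜, ← image_comp]
    refine uniformlyClose_image_of_edist_le (fun x ↦ ?_) 𝒜
    exact (edist_dist _ _).trans_le (ENNReal.ofReal_le_ofReal (hp (f (q x))))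
  exact close_conjugate.trans (conjugate_close.image hq)

lemma LocallyFiniteClasses.image (h𝒜 : LocallyFiniteClasses 𝒜) (hq : IsQI dist dist L C q) :
    LocallyFiniteClasses (image q '' 𝒜) := by
  intro S hS
  obtain ⟨F, hF𝒜, hF, hrep⟩ := h𝒜 _ (hq.isBounded_preimage hS)
  refine ⟨Set.image q '' F, image_mono hF𝒜, hF.image _, ?_⟩
  rintro _ ⟨A, hA, rfl⟩ ⟨_, ⟨a, haA, rfl⟩, haS⟩
  obtain ⟨A', hA'F, hAA'⟩ := hrep A hA ⟨a, haA, haS⟩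
  exact ⟨q '' A', mem_image_of_mem _ hA'F, hq.coarselyEquiv_image_iff.2 hAA'⟩

lemma BoundedClasses.image (h𝒜 : BoundedClasses 𝒜) (hq : IsQI dist dist L C q) :
    BoundedClasses (image q '' 𝒜) := by
  rintro _ ⟨A, hA, rfl⟩
  obtain ⟨r, hr, hbound⟩ := h𝒜 A hA
  refine ⟨ENNReal.ofReal L * r + ENNReal.ofReal C, by finiteness, ?_⟩
  rintro _ ⟨A₁, hA₁, rfl⟩ _ ⟨A₂, hA₂, rfl⟩ h₁ h₂
  rw [hq.coarselyEquiv_image_iff] at h₁ h₂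
  grw [hq.hausdorffEDist_image_le, hbound A₁ hA₁ A₂ hA₂ h₁ h₂]

lemma IsQIChar.image (h𝒜 : IsQIChar dist 𝒜) (hq : IsQI dist dist L C q) :
    IsQIChar dist (image q '' 𝒜) := by
  rw [isQIChar_iff] at h𝒜 ⊢
  exact ⟨h𝒜.1.image hq, h𝒜.2.1.image hq, h𝒜.2.2.image hq⟩

end Collections

section Group

variable {H : Type*} [Group H]

lemma nonempty_of_mem_cosets {PP : Set (Subgroup H)} {A : Set H} (hA : A ∈ cosets PP) :
    A.Nonempty := by
  obtain ⟨g, P, -, rfl⟩ := hA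
  exact (OneMemClass.coe_nonempty P).smul_set

/-- The collection of all left translates of members of `𝒜`. -/
def translates (𝒜 : Set (Set H)) : Set (Set H) :=
  {B | ∃ h : H, ∃ A ∈ 𝒜, B = h • A}

lemma smul_mem_translates {𝒜 : Set (Set H)} {B : Set H} (hB : B ∈ translates 𝒜) (h : H) :
    h • B ∈ translates 𝒜 := by
  obtain ⟨g, A, hA, rfl⟩ := hB
  exact ⟨h * g, A, hA, smul_smul h g A⟩

variable [PseudoMetricSpace H] {𝒜 : Set (Set H)} {A : Set H}

lemma LocallyFiniteClasses.exists_finite_representatives (h𝒜 : LocallyFiniteClasses 𝒜)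
    (hinv : ∀ A ∈ 𝒜, ∀ h : H, h • A ∈ 𝒜) :
    ∃ F ⊆ 𝒜, F.Finite ∧ ∀ A ∈ 𝒜, ∀ a ∈ A, ∃ B ∈ F, CoarselyEquiv (a⁻¹ • A) B := by
  obtain ⟨F, hF𝒜, hF, hrep⟩ := h𝒜 {1} isBounded_singleton
  refine ⟨F, hF𝒜, hF, fun A hA a ha ↦ hrep _ (hinv A hA a⁻¹) ⟨1, ?_, rfl⟩⟩
  simpa only [smul_eq_mul, inv_mul_cancel] using smul_mem_smul_set (a := a⁻¹) ha

variable [IsIsometricSMul H H]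

lemma QIPreserved.exists_uniformlyClose_translates (h𝒜 : QIPreserved 𝒜) :
    ∃ r ≠ ⊤, UniformlyClose r 𝒜 (translates 𝒜) := by
  obtain ⟨r, hr, hclose⟩ := h𝒜 1 0
  refine ⟨r, hr, fun A hA ↦ ⟨A, ⟨1, A, hA, (one_smul H A).symm⟩, by simp⟩, ?_⟩
  rintro _ ⟨h, A, hA, rfl⟩
  obtain ⟨B, hB, hAB⟩ := (hclose _ (isQI_of_isometryEquiv (IsometryEquiv.constSMul h))).1 _
    (mem_image_of_mem _ hA)
  exact ⟨B, hB, hausdorffEDist_comm.trans_le hAB⟩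

/-- The subgroup of all `h` such that `h • A` is coarsely equivalent to `A`. -/
def coarseStabilizer (A : Set H) : Subgroup H where
  carrier := {h | CoarselyEquiv (h • A) A}
  one_mem' := by simpa using CoarselyEquiv.refl A
  mul_mem' {g h} hg hh := by
    simpa only [mem_ofPred_eq, mul_smul] using (CoarselyEquiv.smul hh g).trans hg
  inv_mem' {h} hh := by
    simpa only [mem_ofPred_eq, inv_smul_smul] using (CoarselyEquiv.smul hh h⁻¹).symm

lemma mem_coarseStabilizer {h : H} : h ∈ coarseStabilizer A ↔ CoarselyEquiv (h • A) A :=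
  Iff.rfl

lemma exists_infEDist_coarseStabilizer_le {F : Set (Set H)} (hF : F.Finite)
    (hrep : ∀ a ∈ A, ∃ B ∈ F, CoarselyEquiv (a⁻¹ • A) B) :
    ∃ r ≠ ⊤, ∀ a ∈ A, infEDist a (coarseStabilizer A) ≤ r := by
  choose! k hk using fun (B : Set H) (hB : ∃ a ∈ A, CoarselyEquiv (a⁻¹ • A) B) ↦ hB
  obtain ⟨r, hr, hkr⟩ := exists_ne_top_forall_mem_le hF fun B _ ↦ edist_ne_top 1 (k B)⁻¹
  refine ⟨r, hr, fun a ha ↦ ?_⟩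
  obtain ⟨B, hBF, hB⟩ := hrep a ha
  have hkB : CoarselyEquiv ((k B)⁻¹ • A) (a⁻¹ • A) := (hk B ⟨a, ha, hB⟩).2.trans hB.symm
  have hmem : a * (k B)⁻¹ ∈ coarseStabilizer A := by
    simpa only [mem_coarseStabilizer, mul_smul, smul_inv_smul] using hkB.smul a
  calc infEDist a (coarseStabilizer A) ≤ edist (a * 1) (a * (k B)⁻¹) := by
        rw [mul_one]
        exact infEDist_le_edist_of_mem hmem
    _ = edist 1 (k B)⁻¹ := edist_mul_left ..
    _ ≤ r := hkr B hBF

lemma infEDist_le_of_mem_coarseStabilizer {r : ℝ≥0∞}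
    (hr : ∀ h : H, CoarselyEquiv (h • A) A → hausdorffEDist (h • A) A ≤ r) {a h : H} (ha : a ∈ A)
    (hh : h ∈ coarseStabilizer A) : infEDist h A ≤ edist 1 a + r := calc
  infEDist h A ≤ edist (h * 1) (h * a) + infEDist (h * a) A := by
    rw [mul_one]
    exact infEDist_le_edist_add_infEDist
  _ ≤ edist 1 a + hausdorffEDist (h • A) A := by
    rw [edist_mul_left]
    gcongr
    exact infEDist_le_hausdorffEDist_of_mem (smul_mem_smul_set ha)
  _ ≤ edist 1 a + r := by grw [hr h hh]

lemma BoundedClasses.exists_uniform_bound (hbdd : BoundedClasses 𝒜)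
    (hloc : LocallyFiniteClasses 𝒜) (hinv : ∀ A ∈ 𝒜, ∀ h : H, h • A ∈ 𝒜)
    (hne : ∀ A ∈ 𝒜, A.Nonempty) :
    ∃ r ≠ ⊤, ∀ A ∈ 𝒜, ∀ A' ∈ 𝒜, CoarselyEquiv A A' → hausdorffEDist A A' ≤ r := by
  obtain ⟨F, hF𝒜, hF, hrep⟩ := hloc.exists_finite_representatives hinv
  choose! s hs hbound using hbdd
  obtain ⟨r, hr, hsr⟩ := exists_ne_top_forall_mem_le hF fun B hB ↦ hs B (hF𝒜 hB)
  refine ⟨r, hr, fun A hA A' hA' hAA' ↦ ?_⟩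
  obtain ⟨a, ha⟩ := hne A hA
  obtain ⟨B, hBF, hB⟩ := hrep A hA a ha
  calc hausdorffEDist A A' = hausdorffEDist (a⁻¹ • A) (a⁻¹ • A') :=
        (hausdorffEDist_smul_smul _ _ _).symm
    _ ≤ s B := hbound B (hF𝒜 hBF) _ (hinv A hA _) _ (hinv A' hA' _) hB.symm
        (hB.symm.trans (hAA'.smul _))
    _ ≤ r := hsr B hBF

lemma coarselyEquiv_coarseStabilizer (hloc : LocallyFiniteClasses 𝒜) (hbdd : BoundedClasses 𝒜)
    (hinv : ∀ A ∈ 𝒜, ∀ h : H, h • A ∈ 𝒜) (hA : A ∈ 𝒜) (hAne : A.Nonempty) :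
    CoarselyEquiv A (coarseStabilizer A) := by
  obtain ⟨F, -, hF, hrep⟩ := hloc.exists_finite_representatives hinv
  obtain ⟨r, hr, hAr⟩ := exists_infEDist_coarseStabilizer_le hF (hrep A hA)
  obtain ⟨s, hs, hbound⟩ := hbdd A hA
  have hsA (h : H) (hh : CoarselyEquiv (h • A) A) : hausdorffEDist (h • A) A ≤ s :=
    hbound _ (hinv A hA h) A hA hh.symm (.refl A)
  obtain ⟨a, ha⟩ := hAne
  refine .of_le (r := max r (edist 1 a + s)) (by finiteness) (hausdorffEDist_le_of_infEDist
    (fun y hy ↦ (hAr y hy).trans (le_max_left _ _)) fun h hh ↦ ?_)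
  exact (infEDist_le_of_mem_coarseStabilizer hsA ha hh).trans (le_max_right _ _)

theorem exists_finite_uniformlyClose_cosets_of_smul_mem (hloc : LocallyFiniteClasses 𝒜)
    (hbdd : BoundedClasses 𝒜) (hinv : ∀ A ∈ 𝒜, ∀ h : H, h • A ∈ 𝒜) (hne : ∀ A ∈ 𝒜, A.Nonempty) :
    ∃ QQ : Set (Subgroup H), QQ.Finite ∧ ∃ r ≠ ⊤, UniformlyClose r 𝒜 (cosets QQ) := by
  obtain ⟨F, hF𝒜, hF, hrep⟩ := hloc.exists_finite_representatives hinv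
  obtain ⟨r, hr, hclass⟩ := hbdd.exists_uniform_bound hloc hinv hne
  obtain ⟨s, hs, hstab⟩ := exists_ne_top_forall_mem_le hF fun B hB ↦
    coarselyEquiv_coarseStabilizer hloc hbdd hinv (hF𝒜 hB) (hne B (hF𝒜 hB))
  have hcoset (h : H) {B : Set H} (hB : B ∈ F) :
      hausdorffEDist (h • B) (h • (coarseStabilizer B : Set H)) ≤ s :=
    (hausdorffEDist_smul_smul _ _ _).trans_le (hstab B hB)
  refine ⟨coarseStabilizer '' F, hF.image _, r + s, by finiteness, fun A hA ↦ ?_, ?_⟩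
  · obtain ⟨a, ha⟩ := hne A hA
    obtain ⟨B, hBF, hAB⟩ := hrep A hA a ha
    have hAaB : CoarselyEquiv A (a • B) := by simpa only [smul_inv_smul] using hAB.smul a
    refine ⟨a • (coarseStabilizer B : Set H), ⟨a, _, mem_image_of_mem _ hBF, rfl⟩, ?_⟩
    grw [hausdorffEDist_triangle (t := a • B), hclass A hA _ (hinv B (hF𝒜 hBF) a) hAaB,
      hcoset a hBF]
  · rintro _ ⟨h, _, ⟨B, hBF, rfl⟩, rfl⟩
    exact ⟨h • B, hinv B (hF𝒜 hBF) h, (hcoset h hBF).trans le_add_self⟩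

theorem IsQIChar.exists_finite_uniformlyClose_cosets (h𝒜 : IsQIChar dist 𝒜)
    (hne : ∀ A ∈ 𝒜, A.Nonempty) :
    ∃ QQ : Set (Subgroup H), QQ.Finite ∧ ∃ r ≠ ⊤, UniformlyClose r 𝒜 (cosets QQ) := by
  obtain ⟨r, hr, hclose⟩ := (isQIChar_iff.1 h𝒜).1.exists_uniformlyClose_translates
  obtain ⟨-, hloc, hbdd⟩ := isQIChar_iff.1 (h𝒜.congr hclose hr)
  have hne_translates : ∀ B ∈ translates 𝒜, B.Nonempty := by
    rintro _ ⟨h, A, hA, rfl⟩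
    exact (hne A hA).smul_set
  obtain ⟨QQ, hQQ, s, hs, hcosets⟩ := exists_finite_uniformlyClose_cosets_of_smul_mem hloc hbdd
    (fun _ ↦ smul_mem_translates) hne_translates
  exact ⟨QQ, hQQ, r + s, by finiteness, hclose.trans hcosets⟩

end Group

section WordMetric

variable {G : Type*} [Group G] {S : Set G}

lemma exists_mem_pow_of_mem_closure {M : Type*} [Monoid M] {s : Set M} {x : M}
    (hx : x ∈ Submonoid.closure s) : ∃ n : ℕ, x ∈ s ^ n := by
  induction hx using Submonoid.closure_induction with
  | mem x hx => exact ⟨1, by rwa [pow_one]⟩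
  | one => exact ⟨0, by simp⟩
  | mul x y _ _ hx hy =>
    obtain ⟨m, hm⟩ := hx
    obtain ⟨n, hn⟩ := hy
    exact ⟨m + n, pow_add s m n ▸ mul_mem_mul hm hn⟩

lemma inv_mem_union_inv_pow_iff {n : ℕ} {g : G} : g⁻¹ ∈ (S ∪ S⁻¹) ^ n ↔ g ∈ (S ∪ S⁻¹) ^ n := by
  rw [← Set.mem_inv, ← inv_pow, union_inv, inv_inv, union_comm]

lemma exists_wordDist_eq_and_mem_pow (hS : Subgroup.closure S = ⊤) (g h : G) :
    ∃ n : ℕ, wordDist S g h = n ∧ g⁻¹ * h ∈ (S ∪ S⁻¹) ^ n := by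
  have hmem : g⁻¹ * h ∈ Submonoid.closure (S ∪ S⁻¹) := by
    rw [← Subgroup.closure_toSubmonoid, hS]
    exact Subgroup.mem_top _
  exact ⟨_, rfl, Nat.sInf_mem (exists_mem_pow_of_mem_closure hmem)⟩

lemma wordDist_le_of_mem_pow {g h : G} {n : ℕ} (hn : g⁻¹ * h ∈ (S ∪ S⁻¹) ^ n) :
    wordDist S g h ≤ n :=
  Nat.cast_le.2 (Nat.sInf_le hn)

lemma wordDist_mul_left (k g h : G) : wordDist S (k * g) (k * h) = wordDist S g h := by
  simp only [wordDist, mul_inv_rev, mul_assoc, inv_mul_cancel_left]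

lemma wordDist_self (g : G) : wordDist S g g = 0 :=
  le_antisymm (by simpa using wordDist_le_of_mem_pow (S := S) (g := g) (h := g) (n := 0) (by simp))
    (Nat.cast_nonneg _)

lemma wordDist_comm (g h : G) : wordDist S g h = wordDist S h g := by
  simp only [wordDist, ← inv_mem_union_inv_pow_iff (g := g⁻¹ * h), mul_inv_rev, inv_inv]

lemma wordDist_triangle (hS : Subgroup.closure S = ⊤) (g h k : G) :
    wordDist S g k ≤ wordDist S g h + wordDist S h k := by
  obtain ⟨m, hm, hgh⟩ := exists_wordDist_eq_and_mem_pow hS g h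
  obtain ⟨n, hn, hhk⟩ := exists_wordDist_eq_and_mem_pow hS h k
  rw [hm, hn, ← Nat.cast_add]
  apply wordDist_le_of_mem_pow
  have hgk : g⁻¹ * k = g⁻¹ * h * (h⁻¹ * k) := by group
  rw [hgk, pow_add]
  exact mul_mem_mul hgh hhk

/-- The pseudometric structure whose distance is the word metric. Not an instance, since it depends
on the generating set. -/
noncomputable abbrev wordPseudoMetricSpace (hS : Subgroup.closure S = ⊤) : PseudoMetricSpace G where
  dist := wordDist S
  dist_self := wordDist_self
  dist_comm := wordDist_comm
  dist_triangle := wordDist_triangle hS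

lemma isIsometricSMul_wordPseudoMetricSpace (hS : Subgroup.closure S = ⊤) :
    letI := wordPseudoMetricSpace hS
    IsIsometricSMul G G :=
  letI := wordPseudoMetricSpace hS
  ⟨fun k ↦ Isometry.of_dist_eq (wordDist_mul_left k)⟩

end WordMetric

theorem statement1_general {X H : Type*} [PseudoMetricSpace X] [Group H] [PseudoMetricSpace H]
    [IsIsometricSMul H H] {𝒜 : Set (Set X)} (h𝒜 : IsQIChar dist 𝒜) (hne : ∀ A ∈ 𝒜, A.Nonempty)
    {q : X → H} {L C : ℝ} (hq : IsQI dist dist L C q) :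
    ∃ QQ : Set (Subgroup H), QQ.Finite ∧ IsQIChar dist (cosets QQ) ∧
      ∃ M : ℝ, IsQIPair dist dist L C M q 𝒜 (cosets QQ) := by
  have himage : IsQIChar dist (image q '' 𝒜) := h𝒜.image hq
  obtain ⟨QQ, hQQ, r, hr, hclose⟩ := himage.exists_finite_uniformlyClose_cosets
    (forall_mem_image.2 fun A hA ↦ (hne A hA).image q)
  exact ⟨QQ, hQQ, himage.congr hclose hr, r.toReal + 1, hclose.isQIPair hr hq⟩

/-- If `PP` is a finite qi-characteristic collection of subgroups of a
finitely generated group `G` and `q : G → H` is a quasi-isometry to a finitely generated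
group `H`, then there is a qi-characteristic collection of subgroups `QQ` of `H` such
that `q : (G, PP) → (H, QQ)` is a quasi-isometry of pairs. -/
theorem statement1 {G H : Type*} [Group G] [Group H]
    (S : Set G) (hSfin : S.Finite) (hSgen : Subgroup.closure S = ⊤)
    (T : Set H) (hTfin : T.Finite) (hTgen : Subgroup.closure T = ⊤)
    (PP : Set (Subgroup G)) (hPPfin : PP.Finite)
    (hPPchar : IsQIChar (wordDist S) (cosets PP))
    (q : G → H) (L C : ℝ) (hq : IsQI (wordDist S) (wordDist T) L C q) :
    ∃ QQ : Set (Subgroup H), IsQIChar (wordDist T) (cosets QQ) ∧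
      ∃ L' C' M : ℝ,
        IsQIPair (wordDist S) (wordDist T) L' C' M q (cosets PP) (cosets QQ) := by
  let _ := wordPseudoMetricSpace hSgen
  let _ := wordPseudoMetricSpace hTgen
  have := isIsometricSMul_wordPseudoMetricSpace hTgen
  obtain ⟨QQ, -, hQQ, M, hM⟩ :=
    statement1_general hPPchar (fun _ ↦ nonempty_of_mem_cosets) hq
  exact ⟨QQ, hQQ, L, C, M, hM⟩
end

section
/- A finite subgroup of a finitely generated infinite group is not qi-subcharacteristic: if G is a finitely generated infinite group (with the word metric of a finite generating set) and P is a finite subgroup of G, then there is no qi-characteristic collection of subgroups of G containing P. -/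
open Pointwise
open scoped ENNReal

/-!
Any two nonempty finite sets are at finite Hausdorff distance, so all cosets of a finite subgroup
`P` are coarsely equivalent and condition (3) puts them within a fixed radius `R` of `P` itself.
They cover `G`, whereas the `R`-neighbourhood of a finite set is finite because balls of the word
metric are.
-/

/-- Condition (3) of `IsQIChar`: the members of `𝒜` at finite Hausdorff distance from a given member
are at uniformly bounded Hausdorff distance from each other. -/
def HasBoundedCoarseClasses {X : Type*} (d : X → X → ℝ) (𝒜 : Set (Set X)) : Prop :=
  ∀ A ∈ 𝒜, ∃ r : ℝ≥0∞, r < ⊤ ∧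
    ∀ A₁ ∈ 𝒜, ∀ A₂ ∈ 𝒜, hdist d A A₁ < ⊤ → hdist d A A₂ < ⊤ → hdist d A₁ A₂ ≤ r

section Hausdorff

variable {X : Type*} {d : X → X → ℝ} {A B : Set X}

theorem hdist_lt_top (hA : A.Finite) (hA₀ : A.Nonempty) (hB : B.Finite) (hB₀ : B.Nonempty) :
    hdist d A B < ⊤ := by
  obtain ⟨a, ha⟩ := hA₀
  obtain ⟨b, hb⟩ := hB₀
  refine max_lt ((hA.ciSup_lt_iff ⟨a, ha, by simp⟩).2 fun x _ => ?_)
    ((hB.ciSup_lt_iff ⟨b, hb, by simp⟩).2 fun y _ => ?_)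
  · exact (iInf₂_le b hb).trans_lt ENNReal.ofReal_lt_top
  · exact (iInf₂_le a ha).trans_lt ENNReal.ofReal_lt_top

theorem exists_dist_lt_of_hdist_lt {R : ℝ} (h : hdist d A B < ENNReal.ofReal R) {b : X}
    (hb : b ∈ B) : ∃ a ∈ A, d a b < R := by
  have hinf : ⨅ a ∈ A, ENNReal.ofReal (d a b) < ENNReal.ofReal R :=
    (le_iSup₂ (f := fun y (_ : y ∈ B) => ⨅ a ∈ A, ENNReal.ofReal (d a y)) b hb).trans_lt
      ((le_max_right _ _).trans_lt h)
  simp only [iInf_lt_iff] at hinf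
  obtain ⟨a, ha, hab⟩ := hinf
  exact ⟨a, ha, (ENNReal.ofReal_lt_ofReal_iff'.1 hab).1⟩

theorem finite_sUnion_of_hdist_lt (hball : ∀ x R, {y | d x y < R}.Finite) (hA : A.Finite) {R : ℝ}
    {ℱ : Set (Set X)} (hℱ : ∀ B ∈ ℱ, hdist d A B < ENNReal.ofReal R) : (⋃₀ ℱ).Finite := by
  refine (hA.biUnion fun a _ => hball a R).subset ?_
  rintro b ⟨B, hB, hb⟩
  obtain ⟨a, ha, hab⟩ := exists_dist_lt_of_hdist_lt (hℱ B hB) hb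
  exact Set.mem_biUnion ha hab

theorem HasBoundedCoarseClasses.finite_sUnion {𝒜 ℱ : Set (Set X)}
    (h𝒜 : HasBoundedCoarseClasses d 𝒜) (hball : ∀ x R, {y | d x y < R}.Finite) (hsub : ℱ ⊆ 𝒜)
    (hfin : ∀ A ∈ ℱ, A.Finite) (hne : ∀ A ∈ ℱ, A.Nonempty) : (⋃₀ ℱ).Finite := by
  obtain rfl | ⟨A, hA⟩ := ℱ.eq_empty_or_nonempty
  · simp
  obtain ⟨r, hr, hbound⟩ := h𝒜 A (hsub hA)
  have hcoarse : ∀ B ∈ ℱ, hdist d A B < ⊤ := fun B hB =>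
    hdist_lt_top (hfin A hA) (hne A hA) (hfin B hB) (hne B hB)
  obtain ⟨N, hN⟩ := ENNReal.exists_nat_gt hr.ne
  refine finite_sUnion_of_hdist_lt hball (hfin A hA) (R := N) fun B hB => ?_
  rw [ENNReal.ofReal_natCast]
  exact (hbound A (hsub hA) B (hsub hB) (hcoarse A hA) (hcoarse B hB)).trans_lt hN

end Hausdorff

section WordMetric

variable {G : Type*} [Group G] {S : Set G}

theorem exists_mem_pow_of_mem_closure_s4 {x : G} (hx : x ∈ Subgroup.closure S) :
    ∃ n : ℕ, x ∈ (S ∪ S⁻¹) ^ n := by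
  rw [← Subgroup.mem_toSubmonoid, Subgroup.closure_toSubmonoid] at hx
  induction hx using Submonoid.closure_induction with
  | mem y hy => exact ⟨1, by rwa [pow_one]⟩
  | one => exact ⟨0, by rw [pow_zero, Set.mem_one]⟩
  | mul y z _ _ hy hz =>
    obtain ⟨m, hm⟩ := hy
    obtain ⟨n, hn⟩ := hz
    exact ⟨m + n, by rw [pow_add]; exact Set.mul_mem_mul hm hn⟩

theorem finite_setOf_wordDist_lt (hSfin : S.Finite) (hSgen : Subgroup.closure S = ⊤) (g : G)
    (R : ℝ) : {h | wordDist S g h < R}.Finite := by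
  have hpow (n : ℕ) : ((S ∪ S⁻¹) ^ n).Finite := by
    induction n with
    | zero => rw [pow_zero]; exact Set.finite_one
    | succ n ih => rw [pow_succ]; exact ih.mul (hSfin.union hSfin.inv)
  have hwords : (⋃ n ∈ Set.Iio ⌈R⌉₊, (S ∪ S⁻¹) ^ n).Finite :=
    (Set.finite_Iio _).biUnion fun n _ => hpow n
  refine (hwords.smul_set (a := g)).subset fun h hh => ?_
  have hgeodesic : g⁻¹ * h ∈ (S ∪ S⁻¹) ^ sInf {n : ℕ | g⁻¹ * h ∈ (S ∪ S⁻¹) ^ n} :=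
    Nat.sInf_mem (exists_mem_pow_of_mem_closure_s4 (hSgen ▸ Subgroup.mem_top _))
  rw [Set.mem_smul_set_iff_inv_smul_mem]
  exact Set.mem_biUnion (Nat.lt_ceil.2 hh) hgeodesic

end WordMetric

theorem statement4_general {G : Type*} [Group G] [Infinite G] {S : Set G} (hSfin : S.Finite)
    (hSgen : Subgroup.closure S = ⊤) {A : Set G} (hAfin : A.Finite) (hAne : A.Nonempty)
    {𝒜 : Set (Set G)} (h𝒜 : ∀ g : G, g • A ∈ 𝒜) :
    ¬ HasBoundedCoarseClasses (wordDist S) 𝒜 := by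
  intro hbdd
  have htranslates : (⋃₀ Set.range fun g : G => g • A).Finite :=
    hbdd.finite_sUnion (finite_setOf_wordDist_lt hSfin hSgen) (Set.range_subset_iff.2 h𝒜)
      (Set.forall_mem_range.2 fun _ => hAfin.smul_set)
      (Set.forall_mem_range.2 fun _ => hAne.smul_set)
  have hcover : (⋃₀ Set.range fun g : G => g • A) = Set.univ := by
    obtain ⟨a, ha⟩ := hAne
    exact Set.eq_univ_of_forall fun g =>
      ⟨(g * a⁻¹) • A, Set.mem_range_self _, a, ha, inv_mul_cancel_right g a⟩
  exact Set.infinite_univ (hcover ▸ htranslates)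

/-- A finite subgroup of a finitely generated infinite group is not
qi-subcharacteristic: it belongs to no qi-characteristic collection of subgroups. -/
theorem statement4 {G : Type*} [Group G] [Infinite G]
    (S : Set G) (hSfin : S.Finite) (hSgen : Subgroup.closure S = ⊤)
    (P : Subgroup G) (hPfin : (P : Set G).Finite) :
    ¬ ∃ PP : Set (Subgroup G), P ∈ PP ∧ IsQIChar (wordDist S) (cosets PP) := by
  rintro ⟨PP, hP, hchar⟩
  exact statement4_general (𝒜 := cosets PP) hSfin hSgen hPfin (OneMemClass.coe_nonempty P)
    (fun g => ⟨g, P, hP, rfl⟩) hchar.2.2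
end
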